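/- For every transfer Petri net N = (P, T, M₀) whose initial marking M₀ places a single token in one place and no tokens elsewhere, and for every marking M_f of N, there exists a register set automaton A over the unary alphabet Σ = {a} such that M_f is coverable in N if and only if L(A) ≠ ∅. -/

import Mathlib

/-- A data word over alphabet `Sigma`, with data domain `𝔻 = ℕ`. -/
abbrev DataWord (Sigma : Type) : Type :=
  List (Sigma × ℕ)
/-- A transition `(src, letter, gIn, gNin, upd, tgt)` of a register set automaton.
In the update, `none` stands for the current input value `in`, and `some r`
for register `r`. -/
structure RsATrans (Sigma : Type) where
  src : ℕ
  letter : Sigma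
  gIn : Finset ℕ
  gNin : Finset ℕ
  upd : ℕ → Finset (Option ℕ)
  tgt : ℕ

/-- The register assignment obtained after taking transition `t` with current input
data value `d`, starting from the assignment `f`: each register gets the union of
the contents of the registers in its update set, together with `{d}` if the update
set contains `in`. -/
def RsATrans.apply {Sigma : Type} (t : RsATrans Sigma) (f : ℕ → Finset ℕ) (d : ℕ) :
    ℕ → Finset ℕ := fun r =>
  (t.upd r).biUnion fun o =>
    match o with
    | none => {d}
    | some r' => f r'

/-- A register set automaton (RsA); states and registers are drawn from `ℕ`. -/
structure RsA (Sigma : Type) where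
  Q : Finset ℕ
  R : Finset ℕ
  Δ : Set (RsATrans Sigma)
  I : Finset ℕ
  F : Finset ℕ
  finite_trans : Δ.Finite
  I_sub : I ⊆ Q
  F_sub : F ⊆ Q
  wf : ∀ t ∈ Δ, t.src ∈ Q ∧ t.tgt ∈ Q ∧ t.gIn ⊆ R ∧ t.gNin ⊆ R ∧
    Disjoint t.gIn t.gNin ∧ ∀ r ∈ R, ∀ r' : ℕ, some r' ∈ t.upd r → r' ∈ R

/-- One step of an RsA from configuration `c` to configuration `c'`, reading
the letter `x`. -/
def RsA.Step {Sigma : Type} (A : RsA Sigma) (c : ℕ × (ℕ → Finset ℕ)) (x : Sigma × ℕ)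
    (c' : ℕ × (ℕ → Finset ℕ)) : Prop :=
  ∃ t ∈ A.Δ, t.src = c.1 ∧ t.letter = x.1 ∧
    (∀ r ∈ t.gIn, x.2 ∈ c.2 r) ∧ (∀ r ∈ t.gNin, x.2 ∉ c.2 r) ∧
    c' = (t.tgt, t.apply c.2 x.2)

/-- `A.Run c w c'` holds iff `A` can read the data word `w` going from
configuration `c` to configuration `c'`. -/
inductive RsA.Run {Sigma : Type} (A : RsA Sigma) :
    (ℕ × (ℕ → Finset ℕ)) → DataWord Sigma → (ℕ × (ℕ → Finset ℕ)) → Prop where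
  | nil (c : ℕ × (ℕ → Finset ℕ)) : RsA.Run A c [] c
  | cons {c c' c'' : ℕ × (ℕ → Finset ℕ)} {x : Sigma × ℕ} {w : DataWord Sigma} :
      A.Step c x c' → RsA.Run A c' w c'' → RsA.Run A c (x :: w) c''

/-- The language of an RsA: words on which there exists an accepting run
starting from some initial state with all registers empty. -/
def RsA.Lang {Sigma : Type} (A : RsA Sigma) : Set (DataWord Sigma) :=
  { w | ∃ q₀ ∈ A.I, ∃ c : ℕ × (ℕ → Finset ℕ),
      A.Run (q₀, fun _ => ∅) w c ∧ c.1 ∈ A.F }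
/-- A transition of a transfer Petri net: input and output multiplicities and
the transfer function. Places are drawn from `ℕ`. -/
structure TPNTrans where
  inp : ℕ → ℕ
  out : ℕ → ℕ
  transfer : ℕ → ℕ

/-- A transfer Petri net (TPN); places are drawn from `ℕ`, markings are functions
`ℕ → ℕ` (only the values on `P` matter). -/
structure TPN where
  P : Finset ℕ
  T : Set TPNTrans
  M0 : ℕ → ℕ
  finite_T : T.Finite
  wf : ∀ t ∈ T, ∀ p ∈ P, t.transfer p ∈ P

/-- A TPN transition is enabled in a marking iff every place holds enough tokens. -/
def TPN.Enabled (N : TPN) (t : TPNTrans) (M : ℕ → ℕ) : Prop :=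
  ∀ p ∈ N.P, t.inp p ≤ M p

/-- Firing a TPN transition: remove the input tokens, transfer the remaining tokens
along the transfer function, and add the output tokens. -/
def TPN.fire (N : TPN) (t : TPNTrans) (M : ℕ → ℕ) : ℕ → ℕ := fun p =>
  t.out p + ∑ p' ∈ N.P.filter (fun p' => t.transfer p' = p), (M p' - t.inp p')

/-- The reachable markings of a TPN. -/
inductive TPN.Reachable (N : TPN) : (ℕ → ℕ) → Prop where
  | init : TPN.Reachable N N.M0
  | step {M : ℕ → ℕ} {t : TPNTrans} : TPN.Reachable N M → t ∈ N.T →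
      N.Enabled t M → TPN.Reachable N (N.fire t M)

/-- A marking `M` is coverable iff some reachable marking dominates it on all places. -/
def TPN.Coverable (N : TPN) (M : ℕ → ℕ) : Prop :=
  ∃ M', N.Reachable M' ∧ ∀ p ∈ N.P, M p ≤ M' p

/-!
The reduction.  The automaton is built explicitly from `N` and `Mf`.
Tokens are data values; register `cur p` holds the tokens of place `p`.  Since an RsA cannot
remove a single value from a register, every net transition is simulated by a gadget which
(1) marks consumed / produced values as `used`, (2) copies not yet used tokens one by one
to their transferred position in `new`, and (3) replaces `cur` by `new`.  Tokens which are
not copied are lost, which is harmless for coverability.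
-/
namespace TPNtoRsA

/-- An elementary action of a gadget: consume a token of, or produce a token in, a place. -/
inductive Act where
  | eat : ℕ → Act
  | put : ℕ → Act
deriving DecidableEq

/-- A gadget: simulates the net transition `t` between two control states. -/
structure Gad where
  src : ℕ
  tgt : ℕ
  t : TPNTrans

abbrev cur (p : ℕ) : ℕ := 3 * p + 1
abbrev new (p : ℕ) : ℕ := 3 * p + 2
/-- Intermediate control states. -/
def st (i k : ℕ) : ℕ := Nat.pair i k + 3

theorem st_inj {i k i' k' : ℕ} (h : st i k = st i' k') : i = i' ∧ k = k' := by
  unfold st at h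
  exact Nat.pair_eq_pair.1 (by omega)

/-- The list of actions of a net transition. -/
noncomputable def acts (P : Finset ℕ) (t : TPNTrans) : List Act :=
  (∑ p ∈ P, (Multiset.replicate (t.inp p) (Act.eat p) +
    Multiset.replicate (t.out p) (Act.put p))).toList

theorem count_eat (P : Finset ℕ) (t : TPNTrans) {p : ℕ} (hp : p ∈ P) :
    (acts P t).count (Act.eat p) = t.inp p := by
  rw [acts, ← Multiset.coe_count, Multiset.coe_toList, Multiset.count_sum']
  simp [Multiset.count_replicate, hp]

theorem count_put (P : Finset ℕ) (t : TPNTrans) {p : ℕ} (hp : p ∈ P) :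
    (acts P t).count (Act.put p) = t.out p := by
  rw [acts, ← Multiset.coe_count, Multiset.coe_toList, Multiset.count_sum']
  simp [Multiset.count_replicate, hp]

theorem mem_acts (P : Finset ℕ) (t : TPNTrans) {a : Act} (h : a ∈ acts P t) :
    ∃ p ∈ P, a = Act.eat p ∨ a = Act.put p := by
  rw [acts, Multiset.mem_toList, Multiset.mem_sum] at h
  obtain ⟨p, hp, h⟩ := h
  refine ⟨p, hp, ?_⟩
  rcases Multiset.mem_add.1 h with h | h
  · exact Or.inl (Multiset.eq_of_mem_replicate h)
  · exact Or.inr (Multiset.eq_of_mem_replicate h)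

/-- Update that adds the input value to the registers in `S`. -/
def addTo (S : Finset ℕ) : ℕ → Finset (Option ℕ) := fun r =>
  if r ∈ S then {some r, none} else {some r}

/-- Update that moves `new p` to `cur p` and empties everything else. -/
def flush : ℕ → Finset (Option ℕ) := fun r => if r % 3 = 1 then {some (r + 1)} else ∅

def enterT (i : ℕ) (g : Gad) : RsATrans Unit := ⟨g.src, (), ∅, ∅, addTo ∅, st i 0⟩
noncomputable def leaveT (P : Finset ℕ) (i : ℕ) (g : Gad) : RsATrans Unit :=
  ⟨st i (acts P g.t).length, (), ∅, ∅, flush, g.tgt⟩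
noncomputable def moveT (P : Finset ℕ) (i : ℕ) (g : Gad) (p : ℕ) : RsATrans Unit :=
  ⟨st i (acts P g.t).length, (), {cur p}, {0}, addTo {0, new (g.t.transfer p)},
    st i (acts P g.t).length⟩
def actT (i k : ℕ) : Act → RsATrans Unit
  | Act.eat p => ⟨st i k, (), {cur p}, {0}, addTo {0}, st i (k + 1)⟩
  | Act.put p => ⟨st i k, (), ∅, {0}, addTo {0, new p}, st i (k + 1)⟩

theorem apply_addTo (q q' : ℕ) (a b S : Finset ℕ) (f : ℕ → Finset ℕ) (d r : ℕ) :
    (⟨q, (), a, b, addTo S, q'⟩ : RsATrans Unit).apply f d r =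
      if r ∈ S then insert d (f r) else f r := by
  unfold RsATrans.apply addTo
  by_cases h : r ∈ S
  · simp only [h, if_true]
    ext x; simp
  · simp [h]

theorem apply_flush (q q' : ℕ) (a b : Finset ℕ) (f : ℕ → Finset ℕ) (d r : ℕ) :
    (⟨q, (), a, b, flush, q'⟩ : RsATrans Unit).apply f d r =
      if r % 3 = 1 then f (r + 1) else ∅ := by
  unfold RsATrans.apply flush
  by_cases h : r % 3 = 1
  · simp [h]
  · simp [h]

/-- The transitions of the gadget `g` with index `i`. -/
def gadT (P : Finset ℕ) (i : ℕ) (g : Gad) : Set (RsATrans Unit) :=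
  {enterT i g} ∪ {leaveT P i g} ∪ (moveT P i g '' (P : Set ℕ)) ∪
    ⋃ a ∈ {a | a ∈ acts P g.t}, (fun k => actT i k a) ''
      {k | k < (acts P g.t).length ∧ (acts P g.t)[k]? = some a}

theorem gadT_finite (P : Finset ℕ) (i : ℕ) (g : Gad) : (gadT P i g).Finite := by
  unfold gadT
  refine Set.Finite.union ?_ ?_
  · exact ((Set.finite_singleton _).union (Set.finite_singleton _)).union
      (P.finite_toSet.image _)
  · refine Set.Finite.biUnion (List.finite_toSet _) fun a _ => Set.Finite.image _ ?_
    exact (Set.finite_lt_nat (acts P g.t).length).subset fun k hk => hk.1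

/-- All the transitions. -/
def allT (P : Finset ℕ) (L : List Gad) : Set (RsATrans Unit) :=
  ⋃ i ∈ {i | i < L.length}, ⋃ g ∈ {g | L[i]? = some g}, gadT P i g

theorem allT_finite (P : Finset ℕ) (L : List Gad) : (allT P L).Finite := by
  refine Set.Finite.biUnion (Set.finite_lt_nat _) fun i _ => ?_
  refine Set.Finite.biUnion ?_ fun g _ => gadT_finite P i g
  exact (List.finite_toSet L).subset fun g hg => List.mem_of_getElem? hg

theorem mem_allT (P : Finset ℕ) (L : List Gad) (t : RsATrans Unit) :
    t ∈ allT P L ↔ ∃ i g, L[i]? = some g ∧ (t = enterT i g ∨ t = leaveT P i g ∨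
      (∃ p ∈ P, t = moveT P i g p) ∨
      ∃ k a, (acts P g.t)[k]? = some a ∧ t = actT i k a) := by
  simp only [allT, gadT, Set.mem_iUnion, Set.mem_setOf_eq, Set.mem_union,
    Set.mem_singleton_iff, Set.mem_image, Finset.mem_coe]
  constructor
  · rintro ⟨i, hi, g, hg, ((h | h) | ⟨p, hp, rfl⟩) | ⟨a, ha, k, hk, rfl⟩⟩
    · exact ⟨i, g, hg, Or.inl h⟩
    · exact ⟨i, g, hg, Or.inr (Or.inl h)⟩
    · exact ⟨i, g, hg, Or.inr (Or.inr (Or.inl ⟨p, hp, rfl⟩))⟩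
    · exact ⟨i, g, hg, Or.inr (Or.inr (Or.inr ⟨k, a, hk.2, rfl⟩))⟩
  · rintro ⟨i, g, hg, h | h | ⟨p, hp, rfl⟩ | ⟨k, a, hk, rfl⟩⟩
    · exact ⟨i, (List.getElem?_eq_some_iff.1 hg).1, g, hg, Or.inl (Or.inl (Or.inl h))⟩
    · exact ⟨i, (List.getElem?_eq_some_iff.1 hg).1, g, hg, Or.inl (Or.inl (Or.inr h))⟩
    · exact ⟨i, (List.getElem?_eq_some_iff.1 hg).1, g, hg, Or.inl (Or.inr ⟨p, hp, rfl⟩)⟩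
    · exact ⟨i, (List.getElem?_eq_some_iff.1 hg).1, g, hg,
        Or.inr ⟨a, List.mem_of_getElem? hk, k,
          ⟨(List.getElem?_eq_some_iff.1 hk).1, hk⟩, rfl⟩⟩

/-- The automaton for a list of gadgets: initial state `0`, final state `2`. -/
noncomputable def auto (P : Finset ℕ) (L : List Gad) : RsA Unit where
  Q := {0, 2} ∪ ((allT_finite P L).image RsATrans.src).toFinset ∪
    ((allT_finite P L).image RsATrans.tgt).toFinset
  R := Finset.range (3 * P.sup id + 3)
  Δ := allT P L
  I := {0}
  F := {2}
  finite_trans := allT_finite P L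
  I_sub := by intro x; simp; tauto
  F_sub := by intro x; simp; tauto
  wf := by
    intro t ht
    have hcur : ∀ p ∈ P, 3 * p + 1 < 3 * P.sup id + 3 := by
      intro p hp
      have : p ≤ P.sup id := Finset.le_sup (f := id) hp
      omega
    have hadd : ∀ S : Finset ℕ, ∀ r ∈ Finset.range (3 * P.sup id + 3), ∀ r' : ℕ,
        some r' ∈ addTo S r → r' ∈ Finset.range (3 * P.sup id + 3) := by
      intro S r hr r' h
      unfold addTo at h
      split_ifs at h <;> simp at h <;> exact h ▸ hr
    refine ⟨?_, ?_, ?_⟩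
    · simp only [Finset.mem_union, Set.Finite.mem_toFinset]
      exact Or.inl (Or.inr ⟨t, ht, rfl⟩)
    · simp only [Finset.mem_union, Set.Finite.mem_toFinset]
      exact Or.inr ⟨t, ht, rfl⟩
    · obtain ⟨i, g, hg, h | h | ⟨p, hp, rfl⟩ | ⟨k, a, hk, rfl⟩⟩ := (mem_allT P L t).1 ht
      · subst h
        exact ⟨by simp [enterT], by simp [enterT], by simp [enterT], hadd _⟩
      · subst h
        refine ⟨by simp [leaveT], by simp [leaveT], by simp [leaveT], ?_⟩
        intro r hr r' h
        simp only [leaveT, flush] at h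
        split_ifs at h with h3
        · simp at h hr ⊢
          omega
        · simp at h
      · refine ⟨?_, ?_, ?_, hadd _⟩
        · simpa [moveT] using hcur p hp
        · simp [moveT]
        · simp [moveT]
      · obtain ⟨p, hp, rfl | rfl⟩ := mem_acts P g.t (List.mem_of_getElem? hk)
        · refine ⟨?_, ?_, ?_, hadd _⟩
          · simpa [actT] using hcur p hp
          · simp [actT]
          · simp [actT]
        · exact ⟨by simp [actT], by simp [actT], by simp [actT], hadd _⟩

/-- Unlabelled reachability between configurations. -/
abbrev RT (A : RsA Unit) := Relation.ReflTransGen (fun c c' => ∃ x, A.Step c x c')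

theorem run_iff (A : RsA Unit) (c c' : ℕ × (ℕ → Finset ℕ)) :
    (∃ w, A.Run c w c') ↔ RT A c c' := by
  constructor
  · rintro ⟨w, h⟩
    induction h with
    | nil => exact Relation.ReflTransGen.refl
    | cons hs _ ih => exact Relation.ReflTransGen.head ⟨_, hs⟩ ih
  · intro h
    induction h using Relation.ReflTransGen.head_induction_on with
    | refl => exact ⟨[], RsA.Run.nil _⟩
    | head hs _ ih =>
      obtain ⟨x, hs⟩ := hs
      obtain ⟨w, hw⟩ := ih
      exact ⟨x :: w, RsA.Run.cons hs hw⟩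

theorem lang_iff (P : Finset ℕ) (L : List Gad) :
    (auto P L).Lang ≠ ∅ ↔ ∃ f, RT (auto P L) (0, fun _ => ∅) (2, f) := by
  rw [← Set.nonempty_iff_ne_empty]
  constructor
  · rintro ⟨w, q, hq, c, hr, hc⟩
    obtain rfl : q = 0 := by simpa [auto] using hq
    obtain ⟨q', f⟩ := c
    obtain rfl : q' = 2 := by simpa [auto] using hc
    exact ⟨f, (run_iff _ _ _).1 ⟨w, hr⟩⟩
  · rintro ⟨f, h⟩
    obtain ⟨w, hw⟩ := (run_iff _ _ _).2 h
    exact ⟨w, 0, by simp [auto], _, hw, by simp [auto]⟩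

/-! ### Soundness -/

/-- Counting invariant inside a gadget. -/
def Mid (P : Finset ℕ) (g : Gad) (k : ℕ) (m : ℕ → ℕ) (f : ℕ → Finset ℕ) : Prop :=
  ∀ p ∈ P, ((acts P g.t).take k).count (Act.eat p) + m p ≤ (f (cur p) ∩ f 0).card ∧
    (f (new p)).card ≤ ((acts P g.t).take k).count (Act.put p) +
      ∑ q ∈ P.filter (fun q => g.t.transfer q = p), m q

/-- Invariant outside of gadgets. -/
def Out (N : TPN) (M : ℕ → ℕ) (f : ℕ → Finset ℕ) : Prop :=
  (∀ p ∈ N.P, (f (cur p)).card ≤ M p) ∧ (∀ p, f (new p) = ∅) ∧ f 0 = ∅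

def Inv (N : TPN) (L : List Gad) (Good : ℕ → (ℕ → ℕ) → Prop)
    (c : ℕ × (ℕ → Finset ℕ)) : Prop :=
  (∃ M, Good c.1 M ∧ Out N M c.2) ∨
  ∃ i g k M m, L[i]? = some g ∧ c.1 = st i k ∧ Good g.src M ∧
    (∀ p ∈ N.P, (c.2 (cur p)).card ≤ M p) ∧ Mid N.P g k m c.2

theorem card_inter_insert {s u : Finset ℕ} {d : ℕ} (hs : d ∈ s) (hu : d ∉ u) :
    (s ∩ insert d u).card = (s ∩ u).card + 1 := by
  rw [Finset.inter_insert_of_mem hs, Finset.card_insert_of_notMem]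
  simp [hu]

theorem card_inter_mono (s u : Finset ℕ) (d : ℕ) :
    (s ∩ u).card ≤ (s ∩ insert d u).card :=
  Finset.card_le_card (Finset.inter_subset_inter_left (Finset.subset_insert _ _))

theorem sum_bump (P : Finset ℕ) (δ m : ℕ → ℕ) {p : ℕ} (hp : p ∈ P) (q : ℕ) :
    ∑ x ∈ P.filter (fun x => δ x = q), (m x + if x = p then 1 else 0) =
      (∑ x ∈ P.filter (fun x => δ x = q), m x) + if q = δ p then 1 else 0 := by
  rw [Finset.sum_add_distrib, Finset.sum_ite_eq']
  simp [hp, eq_comm]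

theorem take_count {l : List Act} {k : ℕ} {a : Act} (h : l[k]? = some a) (b : Act) :
    (l.take (k + 1)).count b = (l.take k).count b + if b = a then 1 else 0 := by
  rw [List.take_add_one, h, List.count_append]
  by_cases hb : b = a
  · simp [hb]
  · simp [hb, List.count_eq_zero]

theorem inv_step (N : TPN) (L : List Gad) (Good : ℕ → (ℕ → ℕ) → Prop)
    (hlt : ∀ q M, Good q M → q < 3) (hsrc : ∀ g ∈ L, g.src < 3)
    (hG : ∀ g ∈ L, ∀ M, Good g.src M → N.Enabled g.t M → Good g.tgt (N.fire g.t M))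
    {c c' : ℕ × (ℕ → Finset ℕ)} (hI : Inv N L Good c)
    (hs : ∃ x, (auto N.P L).Step c x c') : Inv N L Good c' := by
  obtain ⟨⟨_, d⟩, t, ht, hsrc', -, hin, hnin, rfl⟩ := hs
  obtain ⟨q, f⟩ := c
  dsimp only at *
  subst hsrc'
  have st3 : ∀ i k, ¬ st i k < 3 := by intro i k; unfold st; omega
  obtain ⟨i, g, hg, h⟩ := (mem_allT N.P L t).1 ht
  have hgL := List.mem_of_getElem? hg
  rcases h with rfl | h
  · -- entering
    rcases hI with ⟨M, hGM, ho⟩ | ⟨i', g', k, M, m, hg', hq, _⟩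
    · refine Or.inr ⟨i, g, 0, M, 0, hg, rfl, hGM, ?_, ?_⟩
      · intro p hp
        simpa [enterT, apply_addTo] using ho.1 p hp
      · intro p hp
        have := ho.2.1 p
        simp [enterT, apply_addTo]
        exact this
    · exact absurd (lt_of_eq_of_lt hq.symm (hsrc g hgL)) (st3 _ _)
  have key : ∀ k', t.src = st i k' → ∃ M m, Good g.src M ∧
      (∀ p ∈ N.P, (f (cur p)).card ≤ M p) ∧ Mid N.P g k' m f := by
    intro k' hk'
    rcases hI with ⟨M, hGM, ho⟩ | ⟨i', g', k, M, m, hg', hq, h1, h2, h3⟩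
    · exact absurd (hk' ▸ hlt _ _ hGM) (st3 _ _)
    · obtain ⟨rfl, rfl⟩ := st_inj (hq.symm.trans hk')
      obtain rfl : g' = g := Option.some.inj (hg'.symm.trans hg)
      exact ⟨M, m, h1, h2, h3⟩
  rcases h with rfl | ⟨p, hp, rfl⟩ | ⟨k, a, hk, rfl⟩
  · obtain ⟨M, m, h1, h2, h3⟩ := key _ rfl
    have hle : ∀ p ∈ N.P, g.t.inp p + m p ≤ M p := by
      intro p hp
      have := (h3 p hp).1
      rw [List.take_length, count_eat _ _ hp] at this
      exact this.trans ((Finset.card_le_card Finset.inter_subset_left).trans (h2 p hp))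
    refine Or.inl ⟨N.fire g.t M, hG g hgL M h1 fun p hp => ?_, ?_, ?_, ?_⟩
    · have := hle p hp; omega
    · intro p hp
      have := (h3 p hp).2
      rw [List.take_length, count_put _ _ hp] at this
      have e : (leaveT N.P i g).apply f d (cur p) = f (new p) := by
        rw [leaveT, apply_flush, if_pos (by unfold cur; omega)]
      change ((leaveT N.P i g).apply f d (cur p)).card ≤ _
      rw [e]
      refine this.trans (Nat.add_le_add_left (Finset.sum_le_sum fun x hx => ?_) _)
      have := hle x (Finset.mem_filter.1 hx).1
      omega
    · intro p
      change (leaveT N.P i g).apply f d (new p) = ∅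
      rw [leaveT, apply_flush, if_neg (by unfold new; omega)]
    · change (leaveT N.P i g).apply f d 0 = ∅
      rw [leaveT, apply_flush, if_neg (by omega)]
  · obtain ⟨M, m, h1, h2, h3⟩ := key _ rfl
    have hd1 : d ∈ f (cur p) := hin _ (by simp [moveT])
    have hd2 : d ∉ f 0 := hnin _ (by simp [moveT])
    have ec : ∀ x, (moveT N.P i g p).apply f d (cur x) = f (cur x) := by
      intro x
      rw [moveT, apply_addTo, if_neg (by simp; omega)]
    have e0 : (moveT N.P i g p).apply f d 0 = insert d (f 0) := by
      rw [moveT, apply_addTo, if_pos (by simp)]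
    have en : ∀ x, (moveT N.P i g p).apply f d (new x) =
        if x = g.t.transfer p then insert d (f (new x)) else f (new x) := by
      intro x
      rw [moveT, apply_addTo]
      congr 1
      simp
    refine Or.inr ⟨i, g, _, M, fun x => m x + if x = p then 1 else 0, hg, rfl, h1, ?_, ?_⟩
    · intro x hx
      simpa only [ec] using h2 x hx
    · intro x hx
      simp only [ec, e0, en]
      rw [sum_bump _ _ _ hp]
      have h := h3 x hx
      constructor
      · split_ifs with hxp
        · subst hxp
          rw [card_inter_insert hd1 hd2]
          omega
        · exact h.1.trans (card_inter_mono _ _ _)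
      · split_ifs with hxp
        · have := Finset.card_insert_le d (f (new x))
          omega
        · exact h.2
  · cases a with
    | eat p =>
      obtain ⟨M, m, h1, h2, h3⟩ := key k rfl
      have hd1 : d ∈ f (cur p) := hin _ (by simp [actT])
      have hd2 : d ∉ f 0 := hnin _ (by simp [actT])
      have ec : ∀ x, (actT i k (Act.eat p)).apply f d (cur x) = f (cur x) := by
        intro x
        rw [actT, apply_addTo, if_neg (by simp)]
      have e0 : (actT i k (Act.eat p)).apply f d 0 = insert d (f 0) := by
        rw [actT, apply_addTo, if_pos (by simp)]
      have en : ∀ x, (actT i k (Act.eat p)).apply f d (new x) = f (new x) := by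
        intro x
        rw [actT, apply_addTo, if_neg (by simp)]
      refine Or.inr ⟨i, g, k + 1, M, m, hg, rfl, h1, ?_, ?_⟩
      · intro x hx
        simpa only [ec] using h2 x hx
      · intro x hx
        simp only [ec, e0, en, take_count hk]
        have h := h3 x hx
        constructor
        · by_cases hxp : x = p
          · subst hxp
            rw [card_inter_insert hd1 hd2]
            simp
            omega
          · simp only [Act.eat.injEq, hxp, if_false]
            exact h.1.trans (card_inter_mono _ _ _)
        · simpa using h.2
    | put p =>
      obtain ⟨M, m, h1, h2, h3⟩ := key k rfl
      have ec : ∀ x, (actT i k (Act.put p)).apply f d (cur x) = f (cur x) := by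
        intro x
        rw [actT, apply_addTo, if_neg (by simp; omega)]
      have e0 : (actT i k (Act.put p)).apply f d 0 = insert d (f 0) := by
        rw [actT, apply_addTo, if_pos (by simp)]
      have en : ∀ x, (actT i k (Act.put p)).apply f d (new x) =
          if x = p then insert d (f (new x)) else f (new x) := by
        intro x
        rw [actT, apply_addTo]
        congr 1
        simp
      refine Or.inr ⟨i, g, k + 1, M, m, hg, rfl, h1, ?_, ?_⟩
      · intro x hx
        simpa only [ec] using h2 x hx
      · intro x hx
        simp only [ec, e0, en, take_count hk]
        have h := h3 x hx
        constructor
        · simpa using h.1.trans (card_inter_mono _ _ _)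
        · simp only [Act.put.injEq]
          split_ifs with hxp
          · have := Finset.card_insert_le d (f (new x))
            omega
          · simpa using h.2

/-! ### Completeness -/

/-- Exact representation of a marking. -/
def Rep (P : Finset ℕ) (M : ℕ → ℕ) (f : ℕ → Finset ℕ) : Prop :=
  (∀ p ∈ P, (f (cur p)).card = M p) ∧
  (∀ p ∈ P, ∀ q ∈ P, p ≠ q → Disjoint (f (cur p)) (f (cur q))) ∧
  (∀ p, f (new p) = ∅) ∧ f 0 = ∅

/-- Exact representation inside a gadget. -/
def MidC (P : Finset ℕ) (g : Gad) (k : ℕ) (m M : ℕ → ℕ) (f : ℕ → Finset ℕ) : Prop :=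
  (∀ p ∈ P, (f (cur p)).card = M p) ∧
  (∀ p ∈ P, ∀ q ∈ P, p ≠ q → Disjoint (f (cur p)) (f (cur q))) ∧
  (∀ p ∈ P, ((acts P g.t).take k).count (Act.eat p) + m p = (f (cur p) ∩ f 0).card) ∧
  (∀ p ∈ P, (f (new p)).card = ((acts P g.t).take k).count (Act.put p) +
      ∑ q ∈ P.filter (fun q => g.t.transfer q = p), m q) ∧
  (∀ p ∈ P, f (new p) ⊆ f 0) ∧
  (∀ p ∈ P, ∀ q ∈ P, p ≠ q → Disjoint (f (new p)) (f (new q)))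

theorem exists_unused {s u : Finset ℕ} (h : (s ∩ u).card < s.card) : ∃ d ∈ s, d ∉ u := by
  by_contra hc
  push Not at hc
  rw [Finset.inter_eq_left.2 hc] at h
  exact lt_irrefl _ h

/-- Adding a fresh value to one of the pairwise disjoint registers `new`. -/
theorem new_disj {P : Finset ℕ} {f f' : ℕ → Finset ℕ} {d p : ℕ} (hd : d ∉ f 0)
    (hsub : ∀ p ∈ P, f (new p) ⊆ f 0)
    (hdis : ∀ p ∈ P, ∀ q ∈ P, p ≠ q → Disjoint (f (new p)) (f (new q)))
    (e0 : f' 0 = insert d (f 0))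
    (en : ∀ x, f' (new x) = if x = p then insert d (f (new x)) else f (new x)) :
    (∀ p ∈ P, f' (new p) ⊆ f' 0) ∧
    (∀ p ∈ P, ∀ q ∈ P, p ≠ q → Disjoint (f' (new p)) (f' (new q))) := by
  constructor
  · intro x hx
    rw [en, e0]
    split_ifs
    · exact Finset.insert_subset_insert _ (hsub x hx)
    · exact (hsub x hx).trans (Finset.subset_insert _ _)
  · intro x hx y hy hxy
    rw [en, en]
    have h1 : d ∉ f (new x) := fun h => hd (hsub x hx h)
    have h2 : d ∉ f (new y) := fun h => hd (hsub y hy h)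
    have h3 := hdis x hx y hy hxy
    split_ifs with a b
    · exact absurd (a.trans b.symm) hxy
    · exact Finset.disjoint_insert_left.2 ⟨h2, h3⟩
    · exact Finset.disjoint_insert_right.2 ⟨h1, h3⟩
    · exact h3

theorem phase_act (P : Finset ℕ) (L : List Gad) {i k : ℕ} {g : Gad} (hg : L[i]? = some g)
    {M : ℕ → ℕ} (hM : ∀ p ∈ P, g.t.inp p ≤ M p) {a : Act}
    (hk : (acts P g.t)[k]? = some a) {f : ℕ → Finset ℕ} (hf : MidC P g k 0 M f) :
    ∃ f', (∃ x, (auto P L).Step (st i k, f) x (st i (k + 1), f')) ∧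
      MidC P g (k + 1) 0 M f' := by
  have hmem : actT i k a ∈ (auto P L).Δ :=
    (mem_allT P L _).2 ⟨i, g, hg, Or.inr (Or.inr (Or.inr ⟨k, a, hk, rfl⟩))⟩
  obtain ⟨c1, c2, c3, c4, c5, c6⟩ := hf
  obtain ⟨p, hp, rfl | rfl⟩ := mem_acts P g.t (List.mem_of_getElem? hk)
  · have hlt : (f (cur p) ∩ f 0).card < (f (cur p)).card := by
      rw [c1 p hp, ← c3 p hp]
      have h1 := take_count hk (Act.eat p)
      have h2 : ((acts P g.t).take (k + 1)).count (Act.eat p) ≤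
        (acts P g.t).count (Act.eat p) := (List.take_sublist _ _).count_le _
      rw [count_eat _ _ hp] at h2
      have := hM p hp
      simp at h1 ⊢
      omega
    obtain ⟨d, hd1, hd2⟩ := exists_unused hlt
    have ec : ∀ x, (actT i k (Act.eat p)).apply f d (cur x) = f (cur x) := by
      intro x
      rw [actT, apply_addTo, if_neg (by simp)]
    have e0 : (actT i k (Act.eat p)).apply f d 0 = insert d (f 0) := by
      rw [actT, apply_addTo, if_pos (by simp)]
    have en : ∀ x, (actT i k (Act.eat p)).apply f d (new x) = f (new x) := by
      intro x
      rw [actT, apply_addTo, if_neg (by simp)]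
    refine ⟨(actT i k (Act.eat p)).apply f d, ⟨((), d), _, hmem, rfl, rfl, ?_, ?_, rfl⟩, ?_⟩
    · simpa [actT] using hd1
    · simpa [actT] using hd2
    · refine ⟨?_, ?_, ?_, ?_, ?_, ?_⟩
      · simpa only [ec] using c1
      · simpa only [ec] using c2
      · intro x hx
        rw [ec, e0, take_count hk]
        by_cases hxp : x = p
        · subst hxp
          rw [card_inter_insert hd1 hd2, ← c3 x hx]
          simp
        · have : d ∉ f (cur x) := fun h =>
            Finset.disjoint_left.1 (c2 x hx p hp hxp) h hd1
          rw [Finset.inter_insert_of_notMem this, ← c3 x hx]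
          simp [hxp]
      · intro x hx
        rw [en, take_count hk, c4 x hx]
        simp
      · intro x hx
        rw [en, e0]
        exact (c5 x hx).trans (Finset.subset_insert _ _)
      · simpa only [en] using c6
  · obtain ⟨d, hd⟩ := Infinite.exists_notMem_finset (f 0 ∪ P.biUnion fun q => f (cur q))
    have hd2 : d ∉ f 0 := fun h => hd (Finset.mem_union_left _ h)
    have hd1 : ∀ x ∈ P, d ∉ f (cur x) := fun x hx h =>
      hd (Finset.mem_union_right _ (Finset.mem_biUnion.2 ⟨x, hx, h⟩))
    have ec : ∀ x, (actT i k (Act.put p)).apply f d (cur x) = f (cur x) := by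
      intro x
      rw [actT, apply_addTo, if_neg (by simp; omega)]
    have e0 : (actT i k (Act.put p)).apply f d 0 = insert d (f 0) := by
      rw [actT, apply_addTo, if_pos (by simp)]
    have en : ∀ x, (actT i k (Act.put p)).apply f d (new x) =
        if x = p then insert d (f (new x)) else f (new x) := by
      intro x
      rw [actT, apply_addTo]
      congr 1
      simp
    refine ⟨(actT i k (Act.put p)).apply f d, ⟨((), d), _, hmem, rfl, rfl, ?_, ?_, rfl⟩, ?_⟩
    · simp [actT]
    · simpa [actT] using hd2
    · refine ⟨?_, ?_, ?_, ?_, new_disj hd2 c5 c6 e0 en⟩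
      · simpa only [ec] using c1
      · simpa only [ec] using c2
      · intro x hx
        rw [ec, e0, take_count hk, Finset.inter_insert_of_notMem (hd1 x hx), ← c3 x hx]
        simp
      · intro x hx
        rw [en, take_count hk]
        simp only [Act.put.injEq]
        split_ifs with hxp
        · rw [Finset.card_insert_of_notMem fun h => hd2 (c5 x hx h), c4 x hx]
          omega
        · rw [c4 x hx]; simp

theorem phase_move (P : Finset ℕ) (L : List Gad) {i : ℕ} {g : Gad} (hg : L[i]? = some g)
    {M m : ℕ → ℕ} {p : ℕ} (hp : p ∈ P) (hlt : g.t.inp p + m p < M p)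
    {f : ℕ → Finset ℕ} (hf : MidC P g (acts P g.t).length m M f) :
    ∃ f', (∃ x, (auto P L).Step (st i (acts P g.t).length, f) x
        (st i (acts P g.t).length, f')) ∧
      MidC P g (acts P g.t).length (fun x => m x + if x = p then 1 else 0) M f' := by
  have hmem : moveT P i g p ∈ (auto P L).Δ :=
    (mem_allT P L _).2 ⟨i, g, hg, Or.inr (Or.inr (Or.inl ⟨p, hp, rfl⟩))⟩
  obtain ⟨c1, c2, c3, c4, c5, c6⟩ := hf
  have hlt' : (f (cur p) ∩ f 0).card < (f (cur p)).card := by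
    rw [c1 p hp, ← c3 p hp, List.take_length, count_eat _ _ hp]
    exact hlt
  obtain ⟨d, hd1, hd2⟩ := exists_unused hlt'
  have ec : ∀ x, (moveT P i g p).apply f d (cur x) = f (cur x) := by
    intro x
    rw [moveT, apply_addTo, if_neg (by simp; omega)]
  have e0 : (moveT P i g p).apply f d 0 = insert d (f 0) := by
    rw [moveT, apply_addTo, if_pos (by simp)]
  have en : ∀ x, (moveT P i g p).apply f d (new x) =
      if x = g.t.transfer p then insert d (f (new x)) else f (new x) := by
    intro x
    rw [moveT, apply_addTo]
    congr 1
    simp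
  refine ⟨(moveT P i g p).apply f d, ⟨((), d), _, hmem, rfl, rfl, ?_, ?_, rfl⟩, ?_⟩
  · simpa [moveT] using hd1
  · simpa [moveT] using hd2
  · refine ⟨?_, ?_, ?_, ?_, new_disj hd2 c5 c6 e0 en⟩
    · simpa only [ec] using c1
    · simpa only [ec] using c2
    · intro x hx
      rw [ec, e0]
      by_cases hxp : x = p
      · subst hxp
        rw [card_inter_insert hd1 hd2, ← c3 x hx]
        simp
        omega
      · have : d ∉ f (cur x) := fun h =>
          Finset.disjoint_left.1 (c2 x hx p hp hxp) h hd1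
        rw [Finset.inter_insert_of_notMem this, ← c3 x hx]
        simp [hxp]
    · intro x hx
      rw [en, sum_bump _ _ _ hp]
      split_ifs with hxp
      · rw [Finset.card_insert_of_notMem fun h => hd2 (c5 x hx h), c4 x hx]
        omega
      · rw [c4 x hx]; simp

theorem phase_acts (P : Finset ℕ) (L : List Gad) {i : ℕ} {g : Gad} (hg : L[i]? = some g)
    {M : ℕ → ℕ} (hM : ∀ p ∈ P, g.t.inp p ≤ M p) {f : ℕ → Finset ℕ}
    (hf : MidC P g 0 0 M f) (k : ℕ) (hk : k ≤ (acts P g.t).length) :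
    ∃ f', RT (auto P L) (st i 0, f) (st i k, f') ∧ MidC P g k 0 M f' := by
  induction k with
  | zero => exact ⟨f, Relation.ReflTransGen.refl, hf⟩
  | succ k ih =>
    obtain ⟨f', h1, h2⟩ := ih (by omega)
    obtain ⟨f'', h3, h4⟩ := phase_act P L hg hM (List.getElem?_eq_getElem (by omega)) h2
    exact ⟨f'', h1.tail h3, h4⟩

theorem phase_moves (P : Finset ℕ) (L : List Gad) {i : ℕ} {g : Gad} (hg : L[i]? = some g)
    {M : ℕ → ℕ} (n : ℕ) : ∀ (m : ℕ → ℕ) (f : ℕ → Finset ℕ),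
    (∀ p ∈ P, g.t.inp p + m p ≤ M p) → ∑ p ∈ P, (M p - (g.t.inp p + m p)) = n →
    MidC P g (acts P g.t).length m M f →
    ∃ f' m', (∀ p ∈ P, g.t.inp p + m' p = M p) ∧
      RT (auto P L) (st i (acts P g.t).length, f) (st i (acts P g.t).length, f') ∧
      MidC P g (acts P g.t).length m' M f' := by
  induction n with
  | zero =>
    intro m f hm hs hf
    refine ⟨f, m, fun p hp => ?_, Relation.ReflTransGen.refl, hf⟩
    have := (Finset.sum_eq_zero_iff.1 hs) p hp
    have := hm p hp
    omega
  | succ n ih =>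
    intro m f hm hs hf
    obtain ⟨p, hp, hne⟩ : ∃ p ∈ P, M p - (g.t.inp p + m p) ≠ 0 := by
      by_contra hc
      push Not at hc
      rw [Finset.sum_eq_zero hc] at hs
      omega
    obtain ⟨f', h1, h2⟩ := phase_move P L hg hp (by omega) hf
    have g1 : ∀ x ∈ P, g.t.inp x + (m x + if x = p then 1 else 0) ≤ M x := by
      intro x hx
      have := hm x hx
      split_ifs with h
      · subst h; omega
      · omega
    have g2 : ∑ x ∈ P, (M x - (g.t.inp x + (m x + if x = p then 1 else 0))) = n := by
      have h := Finset.add_sum_erase P (fun p => M p - (g.t.inp p + m p)) hp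
      rw [← Finset.add_sum_erase P _ hp]
      have h' : ∑ x ∈ P.erase p, (M x - (g.t.inp x + (m x + if x = p then 1 else 0))) =
          ∑ x ∈ P.erase p, (M x - (g.t.inp x + m x)) := by
        refine Finset.sum_congr rfl fun x hx => ?_
        simp [(Finset.mem_erase.1 hx).1]
      rw [h']
      simp only [if_true]
      omega
    obtain ⟨f'', m', h3, h4, h5⟩ := ih _ f' g1 g2 h2
    exact ⟨f'', m', h3, Relation.ReflTransGen.head h1 h4, h5⟩

theorem simulate (N : TPN) (L : List Gad) {g : Gad} (hg : g ∈ L) {M : ℕ → ℕ}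
    (hM : N.Enabled g.t M) {f : ℕ → Finset ℕ} (hf : Rep N.P M f) :
    ∃ f', RT (auto N.P L) (g.src, f) (g.tgt, f') ∧ Rep N.P (N.fire g.t M) f' := by
  obtain ⟨i, hi⟩ := List.mem_iff_getElem?.1 hg
  obtain ⟨c1, c2, c3, c4⟩ := hf
  have e : (enterT i g).apply f 0 = f := by
    funext r
    rw [enterT, apply_addTo, if_neg (by simp)]
  have s1 : ∃ x, (auto N.P L).Step (g.src, f) x (st i 0, f) :=
    ⟨((), 0), enterT i g, (mem_allT _ _ _).2 ⟨i, g, hi, Or.inl rfl⟩, rfl, rfl,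
      by simp [enterT], by simp [enterT], by rw [e]; rfl⟩
  have m0 : MidC N.P g 0 0 M f :=
    ⟨c1, c2, by simp [c4], by simp [c3], by simp [c3], by simp [c3]⟩
  obtain ⟨f1, r1, m1⟩ := phase_acts N.P L hi hM m0 _ le_rfl
  obtain ⟨f2, m, hm, r2, m2⟩ := phase_moves N.P L hi _ 0 f1 (fun p hp => by simpa using hM p hp) rfl m1
  obtain ⟨-, -, -, d4, -, d6⟩ := m2
  have ec : ∀ x, (leaveT N.P i g).apply f2 0 (cur x) = f2 (new x) := by
    intro x
    rw [leaveT, apply_flush, if_pos (by unfold cur; omega)]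
  have s2 : ∃ x, (auto N.P L).Step (st i (acts N.P g.t).length, f2) x
      (g.tgt, (leaveT N.P i g).apply f2 0) :=
    ⟨((), 0), leaveT N.P i g, (mem_allT _ _ _).2 ⟨i, g, hi, Or.inr (Or.inl rfl)⟩, rfl, rfl,
      by simp [leaveT], by simp [leaveT], rfl⟩
  refine ⟨_, (Relation.ReflTransGen.head s1 (r1.trans r2)).tail s2, ?_, ?_, ?_, ?_⟩
  · intro p hp
    rw [ec, d4 p hp, List.take_length, count_put _ _ hp, TPN.fire]
    congr 1
    refine Finset.sum_congr rfl fun x hx => ?_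
    have := hm x (Finset.mem_filter.1 hx).1
    omega
  · intro p hp q hq hpq
    rw [ec, ec]
    exact d6 p hp q hq hpq
  · intro p
    rw [leaveT, apply_flush, if_neg (by unfold new; omega)]
  · rw [leaveT, apply_flush, if_neg (by omega)]

/-! ### The reduction -/

/-- The gadget producing the initial marking. -/
def initG (N : TPN) : Gad := ⟨0, 1, ⟨fun _ => 0, N.M0, id⟩⟩
/-- The gadget testing that the target marking is covered. -/
def finG (Mf : ℕ → ℕ) : Gad := ⟨1, 2, ⟨Mf, fun _ => 0, id⟩⟩
noncomputable def gads (N : TPN) (Mf : ℕ → ℕ) : List Gad :=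
  initG N :: finG Mf :: N.finite_T.toFinset.toList.map fun t => ⟨1, 1, t⟩

theorem mem_gads (N : TPN) (Mf : ℕ → ℕ) (g : Gad) :
    g ∈ gads N Mf ↔ g = initG N ∨ g = finG Mf ∨ ∃ t ∈ N.T, g = ⟨1, 1, t⟩ := by
  simp [gads, eq_comm]

/-- The RsA constructed from the net and the target marking. -/
noncomputable def reduction (N : TPN) (Mf : ℕ → ℕ) : RsA Unit := auto N.P (gads N Mf)

theorem fire_init (N : TPN) : N.fire (initG N).t (fun _ => 0) = N.M0 := by
  funext p
  simp [TPN.fire, initG]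

/-- Which markings may be represented in which control state. -/
def Good (N : TPN) (Mf : ℕ → ℕ) (q : ℕ) (M : ℕ → ℕ) : Prop :=
  (q = 0 ∧ M = fun _ => 0) ∨ (q = 1 ∧ N.Reachable M) ∨ (q = 2 ∧ N.Coverable Mf)

theorem reduction_correct (N : TPN) (Mf : ℕ → ℕ) :
    N.Coverable Mf ↔ (reduction N Mf).Lang ≠ ∅ := by
  rw [reduction, lang_iff]
  constructor
  · rintro ⟨M, hr, hM⟩
    have main : ∃ f, RT (auto N.P (gads N Mf)) (0, fun _ => ∅) (1, f) ∧ Rep N.P M f := by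
      clear hM
      induction hr with
      | init =>
        have h := simulate N (gads N Mf) (g := initG N) ((mem_gads _ _ _).2 (Or.inl rfl))
          (M := fun _ => 0) (f := fun _ => ∅) (fun p _ => le_rfl) (by simp [Rep])
        rwa [fire_init] at h
      | @step M t _ ht he ih =>
        obtain ⟨f, h1, h2⟩ := ih
        obtain ⟨f', h3, h4⟩ := simulate N (gads N Mf) (g := ⟨1, 1, t⟩)
          ((mem_gads _ _ _).2 (Or.inr (Or.inr ⟨t, ht, rfl⟩))) he h2
        exact ⟨f', h1.trans h3, h4⟩
    obtain ⟨f, h1, h2⟩ := main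
    obtain ⟨f', h3, -⟩ := simulate N (gads N Mf) (g := finG Mf)
      ((mem_gads _ _ _).2 (Or.inr (Or.inl rfl))) hM h2
    exact ⟨f', h1.trans h3⟩
  · rintro ⟨f, h⟩
    have main : ∀ c, RT (auto N.P (gads N Mf)) (0, fun _ => ∅) c →
        Inv N (gads N Mf) (Good N Mf) c := by
      intro c hc
      induction hc with
      | refl => exact Or.inl ⟨fun _ => 0, Or.inl ⟨rfl, rfl⟩, by simp [Out]⟩
      | tail _ hs ih =>
        refine inv_step N _ _ ?_ ?_ ?_ ih hs
        · rintro q M (h | h | h) <;> omega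
        · intro g hg
          rcases (mem_gads _ _ _).1 hg with rfl | rfl | ⟨t, ht, rfl⟩ <;> simp [initG, finG]
        · intro g hg M hM he
          rcases (mem_gads _ _ _).1 hg with rfl | rfl | ⟨t, ht, rfl⟩
          · obtain ⟨-, rfl⟩ | ⟨h, -⟩ | ⟨h, -⟩ := hM
            · exact Or.inr (Or.inl ⟨rfl, by rw [fire_init]; exact TPN.Reachable.init⟩)
            · simp [initG] at h
            · simp [initG] at h
          · obtain ⟨h, -⟩ | ⟨-, h⟩ | ⟨h, -⟩ := hM
            · simp [finG] at h
            · exact Or.inr (Or.inr ⟨rfl, M, h, he⟩)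
            · simp [finG] at h
          · obtain ⟨h, -⟩ | ⟨-, h⟩ | ⟨h, -⟩ := hM
            · simp at h
            · exact Or.inr (Or.inl ⟨rfl, TPN.Reachable.step h ht he⟩)
            · simp at h
    rcases main _ h with ⟨M, hM, -⟩ | ⟨i, g, k, M, m, -, hq, -⟩
    · obtain ⟨h, -⟩ | ⟨h, -⟩ | ⟨-, h⟩ := hM
      · simp at h
      · simp at h
      · exact h
    · simp only [st] at hq
      omega

end TPNtoRsA

/-- For every transfer Petri net `N` whose initial marking puts
a single token in one place and nothing elsewhere, and every marking `Mf`, there is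
an RsA `A` over the unary alphabet such that `Mf` is coverable in `N` iff
`L(A) ≠ ∅`. -/
theorem tpn_coverability_to_rsa_emptiness (N : TPN) (Mf : ℕ → ℕ)
    (hM0 : ∃ p₀ ∈ N.P, N.M0 p₀ = 1 ∧ ∀ p ∈ N.P, p ≠ p₀ → N.M0 p = 0) :
    ∃ A : RsA Unit, (N.Coverable Mf ↔ RsA.Lang A ≠ ∅) := by
  exact ⟨TPNtoRsA.reduction N Mf, TPNtoRsA.reduction_correct N Mf⟩
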